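/- Let A be a simple F-subalgebra of M_n(F). If A is a proper subalgebra, then A satisfies the standard identity s_{2n-2}. Equivalently: any simple subalgebra of M_n(F) not satisfying s_{2n-2} equals M_n(F). -/

import Mathlib

open Matrix

/-- The standard polynomial `s_d` evaluated at `x : Fin d → R`. -/
noncomputable def stdPoly {R : Type*} [Ring R] (d : ℕ) (x : Fin d → R) : R :=
  ∑ σ : Equiv.Perm (Fin d), ((Equiv.Perm.sign σ : ℤˣ) : ℤ) • (List.ofFn fun i => x (σ i)).prod

/-!
Amitsur–Levitzki, after Rosset: given `n × n` matrices `x₁, …, x_d`, let `Z = ∑ eₖ xₖ` with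
anticommuting `eₖ` in an exterior algebra, so that `Z ^ d = e₁ ∧ ⋯ ∧ e_d · s_d(x₁, …, x_d)`.
The entries of `Z ^ 2` commute, and all powers of `Z ^ 2` have trace zero because the entries of
`Z` anticommute. The characteristic polynomial `p` of `Z ^ 2` therefore satisfies `X p' = n p`, so
`p = X ^ n` and `(Z ^ 2) ^ n = 0` in characteristic zero, and `s_d` vanishes for `d ≥ 2n`. Generic
integer matrices transfer this to every commutative ring.

Let `K` be an algebraic closure of `F`. The `K`-span of a proper subalgebra `A` of `M_n(F)` is
proper in `M_n(K)` by counting dimensions, so Burnside's theorem gives a proper nonzero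
`A`-invariant subspace `W` of `Kⁿ`. As `A` is simple it embeds into `End_K W`, and
`dim W ≤ n - 1`, so `A` satisfies `s_{2n-2}`.
-/

section Trace

open Polynomial

variable {n R : Type*} [Fintype n] [DecidableEq n] [CommRing R]

theorem derivative_det (M : Matrix n n R[X]) :
    derivative M.det = (M.adjugate * M.map derivative).trace := by
  have adjugate_mul_diag (i : n) :
      (M.adjugate * M.map derivative) i i = (M.updateCol i fun j => derivative (M j i)).det := by
    rw [← cramer_apply, cramer_eq_adjugate_mulVec]
    rfl
  have derivative_prod_col (σ : Equiv.Perm n) : derivative (∏ i, M (σ i) i) =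
      ∑ i, ∏ j, (M.updateCol i fun k => derivative (M k i)) (σ j) j := by
    rw [derivative_prod_finset]
    refine Finset.sum_congr rfl fun i _ => ?_
    rw [← Finset.prod_erase_mul _ _ (Finset.mem_univ i), updateCol_self]
    congr 1
    exact Finset.prod_congr rfl fun j hj => (updateCol_ne (Finset.ne_of_mem_erase hj)).symm
  simp only [trace, diag_apply, adjugate_mul_diag, det_apply, derivative_sum, derivative_smul,
    derivative_prod_col, Finset.smul_sum]
  exact Finset.sum_comm

variable (Y : Matrix n n R)

theorem derivative_charpoly : derivative Y.charpoly = Y.charmatrix.adjugate.trace := by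
  have map_derivative_charmatrix : Y.charmatrix.map derivative = 1 := by
    ext i j : 1
    obtain rfl | h := eq_or_ne i j <;> simp [*]
  rw [charpoly, derivative_det, map_derivative_charmatrix, mul_one]

theorem X_mul_trace_map_C_mul_adjugate_charmatrix (W : Matrix n n R) :
    X * (C.mapMatrix W * Y.charmatrix.adjugate).trace =
      (C.mapMatrix (W * Y) * Y.charmatrix.adjugate).trace + C W.trace * Y.charpoly := by
  have h : C.mapMatrix W * (Y.charmatrix * Y.charmatrix.adjugate) =
      Y.charpoly • C.mapMatrix W := by
    rw [mul_adjugate, ← charpoly, mul_smul_comm, mul_one]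
  have scalar_X_mul : C.mapMatrix W * scalar n X = (X : R[X]) • C.mapMatrix W := by
    rw [scalar_apply, ← smul_one_eq_diagonal, mul_smul_comm, mul_one]
  rw [charmatrix, ← mul_assoc, mul_sub, scalar_X_mul, ← charmatrix, sub_mul, smul_mul_assoc,
    ← map_mul, sub_eq_iff_eq_add'] at h
  have h' := congrArg trace h
  rw [trace_smul, trace_add, trace_smul, smul_eq_mul, smul_eq_mul, mul_comm Y.charpoly] at h'
  rw [h']
  congr 2
  exact (AddMonoidHom.map_trace C W).symm

variable {Y}

theorem trace_map_C_mul_adjugate_charmatrix (hY : ∀ k, (Y ^ (k + 1)).trace = 0) :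
    (C.mapMatrix Y * Y.charmatrix.adjugate).trace = 0 := by
  set t := (C.mapMatrix Y * Y.charmatrix.adjugate).trace
  have trace_pow_mul (k : ℕ) :
      (C.mapMatrix (Y ^ (k + 1)) * Y.charmatrix.adjugate).trace = X ^ k * t := by
    induction k with
    | zero => simp [t]
    | succ k ih =>
      rw [pow_succ' X, mul_assoc, ← ih, X_mul_trace_map_C_mul_adjugate_charmatrix, hY, C_0,
        zero_mul, add_zero, ← pow_succ]
  have trace_aeval_mul (q : R[X]) :
      (C.mapMatrix (aeval Y q * Y) * Y.charmatrix.adjugate).trace = q * t := by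
    induction q using Polynomial.induction_on' with
    | add p q hp hq => simp only [map_add, add_mul, trace_add, hp, hq]
    | monomial k a =>
      have : C.mapMatrix (a • Y ^ (k + 1)) = C a • C.mapMatrix (Y ^ (k + 1)) := by
        ext; simp
      rw [aeval_monomial, ← Algebra.smul_def, smul_mul_assoc, ← pow_succ, this, smul_mul_assoc,
        trace_smul, trace_pow_mul, smul_eq_mul, ← mul_assoc, C_mul_X_pow_eq_monomial]
  -- Cayley–Hamilton: for `q = Y.charpoly` the left side vanishes, and `Y.charpoly` is monic.
  rw [← (charpoly_monic Y).mul_right_eq_zero_iff, ← trace_aeval_mul, aeval_self_charpoly, zero_mul,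
    map_zero, zero_mul, trace_zero]

theorem charpoly_eq_X_pow_card_of_trace_pow [IsAddTorsionFree R]
    (hY : ∀ k, (Y ^ (k + 1)).trace = 0) : Y.charpoly = X ^ Fintype.card n := by
  have euler : X * derivative Y.charpoly = (Fintype.card n : R[X]) * Y.charpoly := by
    have h := X_mul_trace_map_C_mul_adjugate_charmatrix Y 1
    rwa [map_one, one_mul, one_mul, trace_map_C_mul_adjugate_charmatrix hY, zero_add,
      trace_one, map_natCast, ← derivative_charpoly] at h
  nontriviality R
  have coeff_eq_zero (k : ℕ) (hk : k ≠ Fintype.card n) : Y.charpoly.coeff k = 0 := by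
    have h : ((k : ℤ) - Fintype.card n) • Y.charpoly.coeff k = 0 := by
      have coeff_euler := congrArg (coeff · k) euler
      rw [sub_smul, natCast_zsmul, natCast_zsmul, sub_eq_zero, nsmul_eq_mul, nsmul_eq_mul]
      cases k with
      | zero => simpa using coeff_euler
      | succ k => simpa [coeff_derivative, mul_comm] using coeff_euler
    exact (smul_eq_zero.1 h).resolve_left (sub_ne_zero.2 (mod_cast hk))
  ext k
  obtain rfl | hk := eq_or_ne k (Fintype.card n)
  · simpa using (charpoly_monic Y).coeff_natDegree
  · rw [coeff_eq_zero k hk, coeff_X_pow, if_neg hk]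

theorem pow_card_eq_zero_of_trace_pow [IsAddTorsionFree R] (hY : ∀ k, (Y ^ (k + 1)).trace = 0) :
    Y ^ Fintype.card n = 0 := by
  simpa [charpoly_eq_X_pow_card_of_trace_pow hY] using aeval_self_charpoly Y

end Trace

section Anticommuting

variable {n E : Type*} [Fintype n] [Ring E]

open scoped IsMulCommutative in
theorem pow_card_eq_zero_of_commute_of_trace_pow [DecidableEq n] [IsAddTorsionFree E]
    {Y : Matrix n n E} (hcomm : ∀ i j k l, Commute (Y i j) (Y k l))
    (hY : ∀ k, (Y ^ (k + 1)).trace = 0) :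
    Y ^ Fintype.card n = 0 := by
  let s : Set E := Set.range fun p : n × n => Y p.1 p.2
  have : IsMulCommutative (Subring.closure s) := Subring.isMulCommutative_closure <| by
    rintro _ ⟨p, rfl⟩ _ ⟨q, rfl⟩
    exact hcomm ..
  let φ : Subring.closure s →+* E := (Subring.closure s).subtype
  have hφ : Function.Injective φ := Subtype.val_injective
  have : IsAddTorsionFree (Subring.closure s) := hφ.isAddTorsionFree φ.toAddMonoidHom
  let Z : Matrix n n (Subring.closure s) :=
    of fun i j => ⟨Y i j, Subring.subset_closure ⟨(i, j), rfl⟩⟩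
  have map_Z_pow (k : ℕ) : φ.mapMatrix (Z ^ k) = Y ^ k := map_pow _ _ _
  have hZ (k : ℕ) : (Z ^ (k + 1)).trace = 0 := hφ <| by
    rw [AddMonoidHom.map_trace, map_zero, ← hY k, ← map_Z_pow]
    rfl
  rw [← map_Z_pow, pow_card_eq_zero_of_trace_pow hZ, map_zero]

theorem commute_mul_of_anticommute {a b c : E} (hb : a * b = -(b * a)) (hc : a * c = -(c * a)) :
    Commute a (b * c) := by
  rw [Commute, SemiconjBy, ← mul_assoc, hb, neg_mul, mul_assoc, hc, mul_neg, neg_neg, mul_assoc]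

theorem trace_mul_eq_neg_of_anticommute {Z W : Matrix n n E}
    (h : ∀ i j, Z i j * W j i = -(W j i * Z i j)) : (Z * W).trace = -(W * Z).trace := by
  simp only [trace, diag_apply, mul_apply, ← Finset.sum_neg_distrib, h]
  exact Finset.sum_comm

variable [DecidableEq n] {Z : Matrix n n E}

theorem commute_sq_pow_of_anticommute
    (hZ : ∀ i j k l, Z i j * Z k l = -(Z k l * Z i j)) (m : ℕ) (i j k l : n) :
    Commute (Z i j) (((Z ^ 2) ^ m) k l) := by
  have h : Z ^ 2 ∈ (Subring.centralizer {Z i j}).matrix := fun k l => by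
    rw [sq, mul_apply]
    refine sum_mem fun x _ => Subring.mem_centralizer_iff.2 ?_
    rintro _ rfl
    exact commute_mul_of_anticommute (hZ ..) (hZ ..)
  exact Subring.mem_centralizer_iff.1 (pow_mem h m k l) _ rfl

theorem trace_sq_pow_eq_zero_of_anticommute [IsAddTorsionFree E]
    (hZ : ∀ i j k l, Z i j * Z k l = -(Z k l * Z i j)) (m : ℕ) :
    ((Z ^ 2) ^ (m + 1)).trace = 0 := by
  have anticommute (i j : n) : Z i j * (Z * (Z ^ 2) ^ m) j i =
      -((Z * (Z ^ 2) ^ m) j i * Z i j) := by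
    simp only [mul_apply, Finset.mul_sum, Finset.sum_mul, ← Finset.sum_neg_distrib]
    refine Finset.sum_congr rfl fun x _ => ?_
    rw [← mul_assoc, hZ, neg_mul, mul_assoc, (commute_sq_pow_of_anticommute hZ ..).eq, mul_assoc]
  have h := trace_mul_eq_neg_of_anticommute anticommute
  rwa [mul_assoc Z _ Z, ← pow_mul, ← pow_succ, ← pow_succ', ← pow_succ', self_eq_neg,
    add_assoc, one_add_one_eq_two, ← mul_add_one, pow_mul] at h

theorem pow_two_mul_card_eq_zero_of_anticommute [IsAddTorsionFree E]
    (hZ : ∀ i j k l, Z i j * Z k l = -(Z k l * Z i j)) :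
    Z ^ (2 * Fintype.card n) = 0 := by
  rw [pow_mul]
  refine pow_card_eq_zero_of_commute_of_trace_pow (fun i j k l => ?_)
    (trace_sq_pow_eq_zero_of_anticommute hZ)
  have h (a b : n) : Commute (Z a b) ((Z ^ 2) k l) := by
    simpa using commute_sq_pow_of_anticommute hZ 1 a b k l
  have sq_apply : (Z ^ 2) i j = ∑ x, Z i x * Z x j := by rw [sq, mul_apply]
  rw [sq_apply]
  exact Commute.sum_left _ _ _ fun x _ => (h i x).mul_left (h x j)

end Anticommuting

section Grassmann

open ExteriorAlgebra TensorProduct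

variable {R M A : Type*} [CommRing R] [AddCommGroup M] [Module R M] [Ring A] [Algebra R A]
  {d : ℕ}

theorem ι_mul_ι_eq_neg (v w : M) : ι R v * ι R w = -(ι R w * ι R v) :=
  eq_neg_of_add_eq_zero_left (ι_add_mul_swap v w)

theorem prod_ofFn_tmul {B : Type*} [Ring B] [Algebra R B] (a : Fin d → A) (b : Fin d → B) :
    (List.ofFn fun i => a i ⊗ₜ[R] b i).prod = (List.ofFn a).prod ⊗ₜ (List.ofFn b).prod := by
  induction d with
  | zero => simp [Algebra.TensorProduct.one_def]
  | succ d ih => simp only [List.ofFn_succ, List.prod_cons, ih, Algebra.TensorProduct.tmul_mul_tmul]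

theorem sum_ι_tmul_pow (e : Fin d → M) (x : Fin d → A) :
    (∑ k, ι R (e k) ⊗ₜ[R] x k) ^ d = ιMulti R d e ⊗ₜ stdPoly d x := by
  have expand : (∑ k, ι R (e k) ⊗ₜ[R] x k) ^ d =
      ∑ r : Fin d → Fin d, ιMulti R d (e ∘ r) ⊗ₜ (List.ofFn (x ∘ r)).prod := by
    rw [← MultilinearMap.mkPiAlgebraFin_apply_const (R := R), MultilinearMap.map_sum]
    refine Finset.sum_congr rfl fun r _ => ?_
    rw [MultilinearMap.mkPiAlgebraFin_apply, prod_ofFn_tmul, ιMulti_apply]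
    rfl
  rw [expand, stdPoly, tmul_sum]
  refine (Fintype.sum_of_injective _ DFunLike.coe_injective _ _ (fun r hr => ?_) fun σ => ?_).symm
  · have hr' : ¬ Function.Injective (e ∘ r) := fun h =>
      hr ⟨.ofBijective r (Finite.injective_iff_bijective.1 h.of_comp), rfl⟩
    rw [AlternatingMap.map_eq_zero_of_not_injective _ _ hr', zero_tmul]
  · rw [AlternatingMap.map_perm, Units.smul_def, smul_tmul]
    rfl

theorem eq_zero_of_ιMulti_basis_tmul_eq_zero (b : Module.Basis (Fin d) R M) {a : A}
    (h : ιMulti R d b ⊗ₜ[R] a = 0) : a = 0 := by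
  let L : ExteriorAlgebra R M →ₗ[R] R := liftAlternating (Pi.single d b.det)
  have hL : L (ιMulti R d b) = 1 := by
    rw [liftAlternating_apply_ιMulti, Pi.single_eq_same, b.det_self]
  simpa [hL] using congrArg (TensorProduct.lid R A ∘ L.rTensor A) h

theorem isAddTorsionFree_exteriorAlgebra {I : Type*} [LinearOrder I] [IsAddTorsionFree R]
    (b : Module.Basis I R M) : IsAddTorsionFree (ExteriorAlgebra R M) :=
  Function.Injective.isAddTorsionFree b.ExteriorAlgebra.repr.toLinearMap.toAddMonoidHom
    b.ExteriorAlgebra.repr.injective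

theorem stdPoly_eq_zero_of_two_mul_card_le_of_isAddTorsionFree {n : Type*} [Fintype n]
    [DecidableEq n] [IsAddTorsionFree R] (hd : 2 * Fintype.card n ≤ d) (x : Fin d → Matrix n n R) :
    stdPoly d x = 0 := by
  let e := Pi.basisFun R (Fin d)
  have : IsAddTorsionFree (ExteriorAlgebra R (Fin d → R)) := isAddTorsionFree_exteriorAlgebra e
  let Z : Matrix n n (ExteriorAlgebra R (Fin d → R)) :=
    (matrixEquivTensor n R _).symm (∑ k, ι R (e k) ⊗ₜ x k)
  have hZ (i j : n) : Z i j = ι R (∑ k, x k i j • e k) := by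
    simp [Z, Matrix.sum_apply, ← Algebra.commutes, ← Algebra.smul_def]
  have hZ_pow : Z ^ d = 0 := pow_eq_zero_of_le hd <|
    pow_two_mul_card_eq_zero_of_anticommute fun i j k l => by
      simp only [hZ, ι_mul_ι_eq_neg (R := R) (∑ k, x k i j • e k)]
  refine eq_zero_of_ιMulti_basis_tmul_eq_zero e ?_
  rwa [← sum_ι_tmul_pow, ← map_eq_zero_iff _ (matrixEquivTensor n R _).symm.injective, map_pow]

end Grassmann

theorem map_stdPoly {R S : Type*} [Ring R] [Ring S] (f : R →+* S) {d : ℕ} (x : Fin d → R) :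
    f (stdPoly d x) = stdPoly d fun k => f (x k) := by
  simp only [stdPoly, map_sum, map_zsmul, map_list_prod, List.map_ofFn, Function.comp_def]

theorem amitsur_levitzki {n R : Type*} [Fintype n] [DecidableEq n] [CommRing R] {d : ℕ}
    (hd : 2 * Fintype.card n ≤ d) (x : Fin d → Matrix n n R) : stdPoly d x = 0 := by
  let X (k : Fin d) : Matrix n n (MvPolynomial (Fin d × n × n) ℤ) :=
    of fun i j => MvPolynomial.X (k, i, j)
  let f : MvPolynomial (Fin d × n × n) ℤ →+* R :=
    MvPolynomial.eval₂Hom (Int.castRingHom R) fun p => x p.1 p.2.1 p.2.2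
  have hf (k : Fin d) : f.mapMatrix (X k) = x k := by
    ext i j
    simp [f, X]
  simpa only [hf, stdPoly_eq_zero_of_two_mul_card_le_of_isAddTorsionFree hd, map_zero, eq_comm]
    using map_stdPoly f.mapMatrix X

theorem stdPoly_end_eq_zero {R M : Type*} [CommRing R] [AddCommGroup M] [Module R M]
    [Module.Free R M] [Module.Finite R M] {d : ℕ} (hd : 2 * Module.finrank R M ≤ d)
    (x : Fin d → Module.End R M) : stdPoly d x = 0 := by
  obtain _ | _ := subsingleton_or_nontrivial R
  · have := Module.subsingleton R M
    exact Subsingleton.elim _ _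
  let e := LinearMap.toMatrixAlgEquiv (Module.finBasis R M)
  have he : stdPoly d (fun k => e (x k)) = 0 := amitsur_levitzki (by simpa using hd) _
  exact e.injective <| (map_stdPoly e.toRingEquiv.toRingHom x).trans (he.trans (map_zero e).symm)

section Burnside

variable {K V : Type*} [Field K] [IsAlgClosed K] [AddCommGroup V] [Module K V]
  [FiniteDimensional K V]

theorem subalgebra_eq_top_of_isSimpleModule (B : Subalgebra K (Module.End K V))
    [IsSimpleModule B V] : B = ⊤ := by
  refine eq_top_iff.2 fun g _ => ?_
  -- By Schur's lemma `Module.End B V` consists of scalars, so density over it applies to `g`.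
  have schur := (IsSimpleModule.algebraMap_end_bijective_of_isAlgClosed (A := B) (V := V) K).2
  let g' : Module.End (Module.End B V) V :=
    { toFun := g
      map_add' := map_add g
      map_smul' c v := by
        obtain ⟨a, rfl⟩ := schur c
        exact map_smul g a v }
  have : Module.Finite (Module.End B V) V := .of_restrictScalars_finite K _ _
  obtain ⟨r, hr⟩ := Module.Finite.toModuleEnd_moduleEnd_surjective (R := B) g'
  have : g = (r : Module.End K V) := LinearMap.ext fun v => (DFunLike.congr_fun hr v).symm
  exact this ▸ r.2

theorem exists_submodule_ne_bot_ne_top {B : Subalgebra K (Module.End K V)} (hB : B ≠ ⊤) :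
    ∃ W : Submodule B V, W ≠ ⊥ ∧ W ≠ ⊤ := by
  have : Nontrivial V := by
    contrapose! hB
    exact Subsingleton.elim _ _
  contrapose! hB
  have : IsSimpleModule B V :=
    { eq_bot_or_eq_top := fun W => or_iff_not_imp_left.2 (hB W) }
  exact subalgebra_eq_top_of_isSimpleModule B

theorem stdPoly_eq_zero_of_adjoin_range_ne_top {A : Type*} [Ring A] [IsSimpleRing A]
    (ρ : A →+* Module.End K V) (hρ : Algebra.adjoin K (Set.range ρ) ≠ ⊤) {d : ℕ}
    (hd : 2 * Module.finrank K V ≤ d + 2) (x : Fin d → A) : stdPoly d x = 0 := by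
  obtain ⟨W, hW_bot, hW_top⟩ := exists_submodule_ne_bot_ne_top hρ
  let W' : Submodule K V := W.restrictScalars K
  have finrank_lt : Module.finrank K W' < Module.finrank K V :=
    Submodule.finrank_lt (mt (Submodule.restrictScalars_eq_top_iff K _ V).1 hW_top)
  have : Nontrivial W' :=
    Submodule.nontrivial_iff_ne_bot.2 (mt (Submodule.restrictScalars_eq_bot_iff K _ V).1 hW_bot)
  let ρ' : A →+* Algebra.adjoin K (Set.range ρ) :=
    ρ.codRestrict _ fun a => Algebra.subset_adjoin ⟨a, rfl⟩
  let ρW : A →+* Module.End K W' := (Module.toModuleEnd K W).comp ρ'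
  have hρW : stdPoly d (fun k => ρW (x k)) = 0 := stdPoly_end_eq_zero (by lia) _
  -- `ρW` is injective because `A` is simple.
  exact ρW.injective <| (map_stdPoly ρW x).trans (hρW.trans (map_zero ρW).symm)

end Burnside

section BaseChange

variable {F K M N : Type*}

theorem finrank_span_image_le [CommRing F] [StrongRankCondition F] [Ring K] [StrongRankCondition K]
    [Algebra F K] [AddCommGroup M] [Module F M] [AddCommGroup N] [Module F N] [Module K N]
    [IsScalarTower F K N] (φ : M →ₗ[F] N) (p : Submodule F M) [Module.Free F p]
    [Module.Finite F p] :
    Module.finrank K (Submodule.span K (φ '' p)) ≤ Module.finrank F p := by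
  let b := Module.finBasis F p
  have span_basis : Submodule.span F (Set.range fun i => φ (b i)) = p.map φ := by
    have h := congrArg (Submodule.map (φ ∘ₗ p.subtype)) b.span_eq
    rwa [Submodule.map_span, ← Set.range_comp, Submodule.map_comp, Submodule.map_top,
      Submodule.range_subtype] at h
  rw [← Submodule.map_coe, ← span_basis, Submodule.span_span_of_tower]
  exact (finrank_range_le_card (R := K) fun i => φ (b i)).trans_eq (Fintype.card_fin _)

theorem adjoin_image_ne_top [Field F] [Field K] [Algebra F K] [Ring M] [Algebra F M]
    [FiniteDimensional F M] [Ring N] [Algebra F N] [Algebra K N] [IsScalarTower F K N]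
    (φ : M →ₐ[F] N) (hφ : Module.finrank F M = Module.finrank K N) {B : Subalgebra F M}
    (hB : B ≠ ⊤) : Algebra.adjoin K (φ '' B) ≠ ⊤ := by
  intro h
  have span_eq_top : Submodule.span K (φ '' B) = ⊤ := by
    have closure_eq : (Submonoid.closure (φ '' B) : Set N) = φ '' B :=
      congrArg _ (Submonoid.closure_eq (B.toSubmonoid.map φ))
    have adjoin_eq_span := Algebra.adjoin_eq_span K (φ '' B)
    rw [h, closure_eq, Algebra.top_toSubmodule] at adjoin_eq_span
    exact adjoin_eq_span.symm
  have finrank_lt : Module.finrank F B < Module.finrank F M :=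
    Submodule.finrank_lt (s := Subalgebra.toSubmodule B) (mt Algebra.toSubmodule_eq_top.1 hB)
  have finrank_le : Module.finrank K (Submodule.span K (φ '' B)) ≤ Module.finrank F B :=
    finrank_span_image_le φ.toLinearMap (Subalgebra.toSubmodule B)
  rw [span_eq_top, finrank_top, ← hφ] at finrank_le
  exact finrank_lt.not_ge finrank_le

end BaseChange

theorem simple_proper_subalgebra_satisfies_general {F n : Type*} [Field F] [Fintype n]
    [DecidableEq n] (A : Subring (Matrix n n F)) [IsSimpleRing A]
    (hA : Algebra.adjoin F (A : Set (Matrix n n F)) ≠ ⊤) {d : ℕ} (hd : 2 * Fintype.card n ≤ d + 2)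
    {x : Fin d → Matrix n n F} (hx : ∀ k, x k ∈ A) : stdPoly d x = 0 := by
  let K := AlgebraicClosure F
  let φ : Matrix n n F →ₐ[F] Module.End K (n → K) :=
    (toLinAlgEquiv'.restrictScalars F).toAlgHom.comp (Algebra.ofId F K).mapMatrix
  have hφ : Algebra.adjoin K (Set.range (φ.toRingHom.comp A.subtype)) ≠ ⊤ := by
    have finrank_eq :
        Module.finrank F (Matrix n n F) = Module.finrank K (Module.End K (n → K)) := by
      simp [Module.finrank_matrix, Module.finrank_linearMap]
    refine ne_top_of_le_ne_top (adjoin_image_ne_top φ finrank_eq hA) (Algebra.adjoin_mono ?_)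
    rintro _ ⟨a, rfl⟩
    exact ⟨a, Algebra.subset_adjoin a.2, rfl⟩
  have key := stdPoly_eq_zero_of_adjoin_range_ne_top _ hφ (by simpa using hd) fun k => ⟨x k, hx k⟩
  exact (map_stdPoly A.subtype _).symm.trans ((congrArg A.subtype key).trans (map_zero _))

/-- A proper simple `F`-subalgebra of `M_n(F)` satisfies the standard identity `s_{2n-2}`. -/
theorem simple_proper_subalgebra_satisfies (F : Type*) [Field F] (n : ℕ) (hn : 2 ≤ n)
    (A : Subalgebra F (Matrix (Fin n) (Fin n) F)) [IsSimpleRing A] (hA : A ≠ ⊤) :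
    ∀ x : Fin (2 * n - 2) → Matrix (Fin n) (Fin n) F,
      (∀ k, x k ∈ A) → stdPoly (2 * n - 2) x = 0 := by
  have : IsSimpleRing A.toSubring := ‹IsSimpleRing A›
  exact fun _ => simple_proper_subalgebra_satisfies_general A.toSubring
    ((Algebra.adjoin_eq A).trans_ne hA) (by rw [Fintype.card_fin]; lia)
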